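/- Fix c > 1 and ν > 0, and let values be i.i.d. exponential with rate ζ > 0. Then for every ε > 0 there exists B_0 such that for all B ≥ B_0 and all n ≥ ν·B^c, the ratio of the expected UPGA revenue to the expected value surplus satisfies E[B·V_(B+1)] / E[∑_{i=1}^{B} V_(i)] ≥ (c−1)/c − ε, where V_(j) denotes the j-th largest of the n values. Equivalently, as B → ∞ with n ∈ Ω(B^c), the limit of this ratio is at least (c−1)/c. -/

import Mathlib

open MeasureTheory

/-- The `k`-th largest entry of a vector (`k = 1` is the largest); `0` if `k > n`. -/
noncomputable def kthLargest {n : ℕ} (b : Fin n → ℝ) (k : ℕ) : ℝ :=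
  (List.insertionSort (· ≥ ·) (List.ofFn b)).getD (k - 1) 0

/-- `n` i.i.d. draws from the exponential distribution with rate `ζ`. -/
noncomputable def expPi (ζ : ℝ) (n : ℕ) : Measure (Fin n → ℝ) :=
  Measure.pi fun _ : Fin n =>
    volume.withDensity fun x => ENNReal.ofReal (if 0 ≤ x then ζ * Real.exp (-(ζ * x)) else 0)

open Filter Topology ProbabilityTheory

lemma aux_getD_iff (t : ℝ) (l : List ℝ) (hl : l.Pairwise (· ≥ ·)) (k : ℕ) (hk : k < l.length) :
    t ≤ l.getD k 0 ↔ k + 1 ≤ (l.map fun x => if t ≤ x then 1 else 0).sum := by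
  induction l generalizing k with
  | nil => simp at hk
  | cons a l ih =>
    rw [List.pairwise_cons] at hl
    have hz : a < t → (l.map fun x => if t ≤ x then 1 else 0).sum = 0 := by
      intro ha
      rw [List.sum_eq_zero]
      intro x hx
      rw [List.mem_map] at hx
      obtain ⟨y, hy, rfl⟩ := hx
      have := hl.1 y hy
      rw [if_neg (by linarith)]
    cases k with
    | zero =>
      simp only [List.getD_cons_zero, List.map_cons, List.sum_cons]
      by_cases h : t ≤ a
      · simp [h]
      · simp [h, hz (not_le.mp h)]
    | succ k =>
      simp only [List.getD_cons_succ, List.map_cons, List.sum_cons]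
      have hk' : k < l.length := by simpa using hk
      rw [ih hl.2 k hk']
      by_cases h : t ≤ a
      · simp only [h, if_true]; omega
      · simp [h, hz (not_le.mp h)]

lemma aux_sum_getD_le (t : ℝ) (ht : 0 ≤ t) (l : List ℝ) (B : ℕ) :
    ∑ i ∈ Finset.range B, l.getD i 0 ≤ B * t + (l.map fun x => max (x - t) 0).sum := by
  induction l generalizing B with
  | nil => simp; positivity
  | cons a l ih =>
    have hnn : 0 ≤ (l.map fun x => max (x - t) 0).sum := by
      apply List.sum_nonneg
      intro x hx
      rw [List.mem_map] at hx
      obtain ⟨y, hy, rfl⟩ := hx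
      exact le_max_right _ _
    cases B with
    | zero =>
      simp only [List.map_cons, List.sum_cons, Finset.range_zero, Finset.sum_empty]
      have := le_max_right (a - t) 0
      simp; linarith
    | succ B =>
      rw [Finset.sum_range_succ']
      simp only [List.getD_cons_succ, List.getD_cons_zero, List.map_cons, List.sum_cons]
      have := ih B
      have := le_max_left (a - t) 0
      push_cast
      linarith

lemma aux_abs_getD_le (l : List ℝ) (k : ℕ) :
    |l.getD k 0| ≤ (l.map fun x => |x|).sum := by
  induction l generalizing k with
  | nil => simp
  | cons a l ih =>
    have := ih 0
    have h0 := (abs_nonneg _).trans this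
    cases k with
    | zero => simp only [List.getD_cons_zero, List.map_cons, List.sum_cons]; linarith
    | succ k =>
      simp only [List.getD_cons_succ, List.map_cons, List.sum_cons]
      linarith [ih k, abs_nonneg a]

lemma aux_sum_sort {M : Type*} [AddCommMonoid M] {n : ℕ} (v : Fin n → ℝ) (f : ℝ → M) :
    ((List.insertionSort (· ≥ ·) (List.ofFn v)).map f).sum = ∑ j, f (v j) := by
  rw [((List.perm_insertionSort (· ≥ ·) (List.ofFn v)).map f).sum_eq, List.map_ofFn, List.sum_ofFn]
  rfl

lemma kth_iff {n : ℕ} (v : Fin n → ℝ) (k : ℕ) (hk : k < n) (t : ℝ) :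
    t ≤ kthLargest v (k + 1) ↔ k + 1 ≤ ∑ j, if t ≤ v j then 1 else 0 := by
  unfold kthLargest
  rw [Nat.add_sub_cancel, aux_getD_iff t _ (List.pairwise_insertionSort _ _) k (by simpa using hk),
    aux_sum_sort v (fun x => if t ≤ x then 1 else 0)]

lemma kth_sum_le {n : ℕ} (v : Fin n → ℝ) (B : ℕ) (t : ℝ) (ht : 0 ≤ t) :
    ∑ i ∈ Finset.range B, kthLargest v (i + 1) ≤ B * t + ∑ j, max (v j - t) 0 := by
  rw [← aux_sum_sort v (fun x => max (x - t) 0)]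
  exact aux_sum_getD_le t ht _ B

lemma kth_abs_le {n : ℕ} (v : Fin n → ℝ) (k : ℕ) :
    |kthLargest v k| ≤ ∑ j, |v j| := by
  rw [← aux_sum_sort v (fun x => |x|)]
  exact aux_abs_getD_le _ _

lemma kth_measurable {n : ℕ} (k : ℕ) :
    Measurable (fun v : Fin n → ℝ => kthLargest v (k + 1)) := by
  by_cases hk : k < n
  · apply measurable_of_Ici
    intro t
    have : (fun v : Fin n → ℝ => kthLargest v (k + 1)) ⁻¹' Set.Ici t
        = {v | k + 1 ≤ ∑ j, if t ≤ v j then 1 else 0} := by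
      ext v
      simp only [Set.mem_preimage, Set.mem_Ici, Set.mem_setOf_eq]
      exact kth_iff v k hk t
    rw [this]
    apply measurableSet_le measurable_const
    apply Finset.measurable_sum
    intro j _
    exact Measurable.ite (measurableSet_le measurable_const (measurable_pi_apply j))
      measurable_const measurable_const
  · have : (fun v : Fin n → ℝ => kthLargest v (k + 1)) = fun _ => 0 := by
      funext v
      unfold kthLargest
      rw [List.getD_eq_default]
      simpa using hk
    rw [this]
    exact measurable_const

/-- one exponential draw -/
noncomputable def expOne (ζ : ℝ) : Measure ℝ :=
  volume.withDensity fun x => ENNReal.ofReal (if 0 ≤ x then ζ * Real.exp (-(ζ * x)) else 0)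

lemma expOne_eq (ζ : ℝ) : expOne ζ = expMeasure ζ := by
  unfold expOne expMeasure gammaMeasure
  congr 1
  funext x
  rw [← exponentialPDF_eq]
  rfl

lemma expOne_prob {ζ : ℝ} (hζ : 0 < ζ) : IsProbabilityMeasure (expOne ζ) := by
  rw [expOne_eq]; exact isProbabilityMeasure_expMeasure hζ

lemma dens_meas (ζ : ℝ) :
    Measurable fun x : ℝ => if 0 ≤ x then ζ * Real.exp (-(ζ * x)) else 0 := by
  apply Measurable.ite measurableSet_Ici <;> fun_prop

lemma expOne_nonneg (ζ : ℝ) : ∀ᵐ x ∂(expOne ζ), 0 ≤ x := by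
  rw [ae_iff]
  have : {a : ℝ | ¬ 0 ≤ a} = Set.Iio 0 := by ext; simp
  rw [this, expOne, withDensity_apply _ measurableSet_Iio]
  rw [setLIntegral_congr_fun measurableSet_Iio (g := fun _ => 0), lintegral_zero]
  intro x hx
  have : ¬ (0 ≤ x) := not_le.mpr hx
  simp [this]

lemma expOne_tail {ζ : ℝ} (hζ : 0 < ζ) (t : ℝ) (ht : 0 ≤ t) :
    (expOne ζ).real (Set.Ioi t) = Real.exp (-(ζ * t)) := by
  have := expOne_prob hζ
  have h1 : (expOne ζ).real (Set.Iic t) = 1 - Real.exp (-(ζ * t)) := by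
    rw [← cdf_eq_real, expOne_eq, cdf_expMeasure_eq hζ, if_pos ht]
  have h2 := probReal_compl_eq_one_sub (μ := expOne ζ) (measurableSet_Iic (a := t))
  rw [Set.compl_Iic] at h2
  linarith

lemma excess_deriv {ζ : ℝ} (hζ : 0 < ζ) (t x : ℝ) :
    HasDerivAt (fun x => -((x - t + 1 / ζ) * Real.exp (-(ζ * x))))
      ((x - t) * (ζ * Real.exp (-(ζ * x)))) x := by
  have h1 : HasDerivAt (fun x : ℝ => x - t + 1 / ζ) 1 x :=
    ((hasDerivAt_id x).sub_const t).add_const _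
  have h2 : HasDerivAt (fun x : ℝ => Real.exp (-(ζ * x))) (Real.exp (-(ζ * x)) * (-(ζ * 1))) x :=
    (((hasDerivAt_id x).const_mul ζ).neg).exp
  refine ((h1.mul h2).neg).congr_deriv ?_
  field_simp
  ring

lemma excess_tendsto {ζ : ℝ} (hζ : 0 < ζ) (t : ℝ) :
    Tendsto (fun x => -((x - t + 1 / ζ) * Real.exp (-(ζ * x)))) atTop (𝓝 0) := by
  have h1 : Tendsto (fun x : ℝ => Real.exp (-(ζ * x))) atTop (𝓝 0) :=
    Real.tendsto_exp_neg_atTop_nhds_zero.comp (tendsto_id.const_mul_atTop hζ)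
  have h2 : Tendsto (fun x : ℝ => (ζ * x) ^ 1 * Real.exp (-(ζ * x))) atTop (𝓝 0) :=
    (Real.tendsto_pow_mul_exp_neg_atTop_nhds_zero 1).comp (tendsto_id.const_mul_atTop hζ)
  have h3 := ((h2.const_mul (1 / ζ)).add (h1.const_mul (1 / ζ - t))).neg
  simp only [mul_zero, add_zero, neg_zero] at h3
  refine h3.congr fun x => ?_
  field_simp
  ring

lemma excess_fun {ζ : ℝ} (hζ : 0 < ζ) (t : ℝ) (ht : 0 ≤ t) :
    (fun x : ℝ => max (x - t) 0 *
      (ENNReal.ofReal (if 0 ≤ x then ζ * Real.exp (-(ζ * x)) else 0)).toReal)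
    = (Set.Ioi t).indicator fun x => (x - t) * (ζ * Real.exp (-(ζ * x))) := by
  funext x
  by_cases hx : t < x
  · rw [Set.indicator_of_mem (by exact hx), if_pos (by linarith),
      ENNReal.toReal_ofReal (by positivity), max_eq_left (by linarith)]
  · rw [Set.indicator_of_notMem (by exact hx), max_eq_right (by linarith), zero_mul]

lemma excess_integrable {ζ : ℝ} (hζ : 0 < ζ) (t : ℝ) (ht : 0 ≤ t) :
    Integrable (fun x => max (x - t) 0) (expOne ζ) := by
  unfold expOne
  rw [integrable_withDensity_iff (dens_meas ζ).ennreal_ofReal (by simp), excess_fun hζ t ht,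
    integrable_indicator_iff measurableSet_Ioi]
  refine integrableOn_Ioi_deriv_of_nonneg' (fun x _ => excess_deriv hζ t x) ?_ (excess_tendsto hζ t)
  intro x hx
  have : 0 < x - t := sub_pos.mpr hx
  positivity

lemma excess_integral {ζ : ℝ} (hζ : 0 < ζ) (t : ℝ) (ht : 0 ≤ t) :
    ∫ x, max (x - t) 0 ∂(expOne ζ) = Real.exp (-(ζ * t)) / ζ := by
  unfold expOne
  rw [integral_withDensity_eq_integral_toReal_smul (dens_meas ζ).ennreal_ofReal (by simp)]
  simp_rw [smul_eq_mul, mul_comm _ (max _ _)]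
  rw [excess_fun hζ t ht, integral_indicator measurableSet_Ioi,
    integral_Ioi_of_hasDerivAt_of_nonneg' (fun x _ => excess_deriv hζ t x) ?_ (excess_tendsto hζ t)]
  · field_simp
    ring
  · intro x hx
    have : 0 < x - t := sub_pos.mpr hx
    positivity

lemma expOne_integrable_abs {ζ : ℝ} (hζ : 0 < ζ) : Integrable (fun x => |x|) (expOne ζ) := by
  refine (excess_integrable hζ 0 le_rfl).congr ?_
  filter_upwards [expOne_nonneg ζ] with x hx
  rw [sub_zero, max_eq_left hx, abs_of_nonneg hx]

lemma expPi_eq (ζ : ℝ) (n : ℕ) : expPi ζ n = Measure.pi fun _ : Fin n => expOne ζ := rfl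

lemma expPi_prob {ζ : ℝ} (hζ : 0 < ζ) (n : ℕ) : IsProbabilityMeasure (expPi ζ n) := by
  have := expOne_prob hζ
  rw [expPi_eq]; infer_instance

lemma kth_integrable {ζ : ℝ} (hζ : 0 < ζ) (n k : ℕ) :
    Integrable (fun v => kthLargest v (k + 1)) (expPi ζ n) := by
  have := expOne_prob hζ
  have h : Integrable (fun v : Fin n → ℝ => ∑ j, |v j|) (expPi ζ n) := by
    rw [expPi_eq]
    apply integrable_finsetSum
    intro j _
    exact integrable_comp_eval (f := fun x => |x|) (expOne_integrable_abs hζ)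
  refine h.mono' (kth_measurable k).aestronglyMeasurable (Eventually.of_forall fun v => ?_)
  exact kth_abs_le v _

lemma surplus_le {ζ : ℝ} (hζ : 0 < ζ) (n B : ℕ) (t : ℝ) (ht : 0 ≤ t) :
    ∫ v, (∑ i ∈ Finset.range B, kthLargest v (i + 1)) ∂(expPi ζ n)
      ≤ B * t + n * (Real.exp (-(ζ * t)) / ζ) := by
  have := expOne_prob hζ
  have := expPi_prob hζ n
  have hj : ∀ j : Fin n, Integrable (fun v : Fin n → ℝ => max (v j - t) 0) (expPi ζ n) := fun j =>
    integrable_comp_eval (μ := fun _ : Fin n => expOne ζ) (f := fun x : ℝ => max (x - t) 0) (excess_integrable hζ t ht)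
  have hI : Integrable (fun v : Fin n → ℝ => ∑ j, max (v j - t) 0) (expPi ζ n) :=
    integrable_finsetSum _ fun j _ => hj j
  calc _ ≤ ∫ v : Fin n → ℝ, (B * t + ∑ j, max (v j - t) 0) ∂(expPi ζ n) := by
        apply integral_mono
        · exact integrable_finsetSum _ fun i _ => kth_integrable hζ n i
        · exact (integrable_const _).add hI
        · exact fun v => kth_sum_le v B t ht
    _ = _ := by
        rw [integral_add (integrable_const _) hI, integral_finsetSum _ fun j _ => hj j]
        have : ∀ j : Fin n, ∫ v : Fin n → ℝ, max (v j - t) 0 ∂(expPi ζ n)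
            = Real.exp (-(ζ * t)) / ζ := by
          intro j
          rw [expPi_eq, ← excess_integral hζ t ht]
          exact integral_comp_eval (μ := fun _ : Fin n => expOne ζ)
            (f := fun x => max (x - t) 0) (excess_integrable hζ t ht).aestronglyMeasurable
        simp [this]

lemma half_integral {ζ : ℝ} (hζ : 0 < ζ) (t : ℝ) (ht : 0 ≤ t) :
    ∫ x, (if t ≤ x then (1 / 2 : ℝ) else 1) ∂(expOne ζ) ≤ Real.exp (-(Real.exp (-(ζ * t)) / 2)) := by
  have := expOne_prob hζ
  have h : ∀ x : ℝ, (if t ≤ x then (1 / 2 : ℝ) else 1)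
      = 1 - (Set.Ici t).indicator (fun _ => (1 / 2 : ℝ)) x := by
    intro x
    by_cases hx : t ≤ x
    · simp [hx]; norm_num
    · simp [hx]
  simp_rw [h]
  rw [integral_sub (integrable_const _) ((integrable_const _).indicator measurableSet_Ici),
    integral_indicator measurableSet_Ici]
  have h1 : Real.exp (-(ζ * t)) ≤ (expOne ζ).real (Set.Ici t) := by
    rw [← expOne_tail hζ t ht]
    exact measureReal_mono Set.Ioi_subset_Ici_self
  have h2 := Real.add_one_le_exp (-(Real.exp (-(ζ * t)) / 2))
  simp
  linarith

lemma revenue_ge {ζ : ℝ} (hζ : 0 < ζ) (n B : ℕ) (hB : B < n) (t : ℝ) (ht : 0 ≤ t) :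
    t * (1 - 2 ^ B * Real.exp (-(n * Real.exp (-(ζ * t)) / 2)))
      ≤ ∫ v, kthLargest v (B + 1) ∂(expPi ζ n) := by
  have := expOne_prob hζ
  have := expPi_prob hζ n
  set g : ℝ → ℝ := fun x => if t ≤ x then (1 / 2 : ℝ) else 1 with hg
  have hgi : Integrable g (expOne ζ) := by
    refine Integrable.of_bound (C := 1) ?_ (Eventually.of_forall fun x => ?_)
    · exact (Measurable.ite measurableSet_Ici measurable_const
        measurable_const).aestronglyMeasurable
    · simp only [hg]; split_ifs <;> norm_num
  have hPi : Integrable (fun v : Fin n → ℝ => ∏ j, g (v j)) (expPi ζ n) :=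
    Integrable.fintype_prod (f := fun _ => g) fun _ => hgi
  have hP : ∫ v : Fin n → ℝ, ∏ j, g (v j) ∂(expPi ζ n)
      ≤ Real.exp (-(n * Real.exp (-(ζ * t)) / 2)) := by
    rw [expPi_eq, integral_fintype_prod_eq_pow, Fintype.card_fin]
    calc (∫ x, g x ∂(expOne ζ)) ^ n ≤ (Real.exp (-(Real.exp (-(ζ * t)) / 2))) ^ n := by
          apply pow_le_pow_left₀ _ (half_integral hζ t ht)
          apply integral_nonneg
          intro x
          simp only [hg, Pi.zero_apply]; split_ifs <;> norm_num
      _ = _ := by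
          rw [← Real.exp_nat_mul]; congr 1; ring
  have hae : ∀ᵐ v ∂(expPi ζ n), ∀ j, 0 ≤ v j := by
    rw [ae_all_iff]
    intro j
    exact (measurePreserving_eval (fun _ : Fin n => expOne ζ) j).quasiMeasurePreserving.ae
      (expOne_nonneg ζ)
  calc t * (1 - 2 ^ B * Real.exp (-(n * Real.exp (-(ζ * t)) / 2)))
      ≤ t * (1 - 2 ^ B * ∫ v : Fin n → ℝ, ∏ j, g (v j) ∂(expPi ζ n)) := by gcongr
    _ = ∫ v : Fin n → ℝ, (t - t * 2 ^ B * ∏ j, g (v j)) ∂(expPi ζ n) := by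
        rw [integral_sub (integrable_const _) (hPi.const_mul _), integral_const_mul]
        simp; ring
    _ ≤ _ := by
        apply integral_mono_ae ((integrable_const _).sub (hPi.const_mul _))
          (kth_integrable hζ n B)
        filter_upwards [hae] with v hv
        have h0 : 0 ≤ kthLargest v (B + 1) := by
          rw [kth_iff v B hB]
          simp [hv]; omega
        have hpr : ∏ j, g (v j) = (1 / 2) ^ (∑ j, if t ≤ v j then 1 else 0) := by
          rw [← Finset.prod_pow_eq_pow_sum]
          apply Finset.prod_congr rfl
          intro j _
          simp only [hg]; split_ifs <;> simp
        have hpos : 0 ≤ ∏ j, g (v j) := by rw [hpr]; positivity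
        by_cases h : t ≤ kthLargest v (B + 1)
        · have : 0 ≤ t * 2 ^ B * ∏ j, g (v j) := by positivity
          show t - t * 2 ^ B * ∏ j, g (v j) ≤ _
          linarith
        · rw [kth_iff v B hB] at h
          show t - t * 2 ^ B * ∏ j, g (v j) ≤ _
          have h1 : (1 / 2 : ℝ) ^ B ≤ ∏ j, g (v j) := by
            rw [hpr]
            exact pow_le_pow_of_le_one (by norm_num) (by norm_num) (by omega)
          have h2 : (2 : ℝ) ^ B * (1 / 2) ^ B = 1 := by
            rw [← mul_pow]; norm_num
          have h3 : (1 : ℝ) ≤ 2 ^ B * ∏ j, g (v j) := by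
            rw [← h2]; gcongr
          nlinarith

/-- Non-asymptotic bound. -/
lemma ratio_ge {ζ : ℝ} (hζ : 0 < ζ) (n B : ℕ) (hB : 0 < B) (L : ℝ)
    (hL : L = Real.log (n / B)) (hL4 : 2 < L) :
    (1 - 3 / (L + 1)) * (1 - Real.exp (-(B : ℝ)))
      ≤ (∫ v, (B : ℝ) * kthLargest v (B + 1) ∂(expPi ζ n))
            / (∫ v, (∑ i ∈ Finset.range B, kthLargest v (i + 1)) ∂(expPi ζ n)) := by
  have hB' : (0 : ℝ) < B := by exact_mod_cast hB
  have hn : 0 < (n : ℝ) := by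
    rcases Nat.eq_zero_or_pos n with h | h
    · subst h; simp at hL; linarith
    · exact_mod_cast h
  have hexpL : Real.exp (-L) = B / n := by
    rw [hL, Real.exp_neg, Real.exp_log (by positivity), inv_div]
  have hlog4 : Real.log 4 ≤ 2 := by
    rw [show (4 : ℝ) = 2 ^ 2 by norm_num, Real.log_pow]
    have := Real.log_two_lt_d9
    push_cast; linarith
  have hBn : B < n := by
    have h1 : Real.exp (-L) < 1 := Real.exp_lt_one_iff.mpr (by linarith)
    rw [hexpL, div_lt_one hn] at h1
    exact_mod_cast h1
  set S := ∫ v, (∑ i ∈ Finset.range B, kthLargest v (i + 1)) ∂(expPi ζ n) with hS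
  set R := ∫ v, kthLargest v (B + 1) ∂(expPi ζ n) with hR
  have hup : S ≤ B * ((L + 1) / ζ) := by
    have := surplus_le hζ n B (L / ζ) (by positivity)
    rw [show ζ * (L / ζ) = L by field_simp, hexpL] at this
    refine this.trans (le_of_eq ?_)
    field_simp
  have hlow : (L - 2) / ζ * (1 - Real.exp (-(B : ℝ))) ≤ R := by
    have hl : 0 ≤ (L - Real.log 4) / ζ := div_nonneg (by linarith) hζ.le
    have h := revenue_ge hζ n B hBn _ hl
    rw [show ζ * ((L - Real.log 4) / ζ) = L - Real.log 4 by field_simp,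
      show -(L - Real.log 4) = Real.log 4 + -L by ring, Real.exp_add, hexpL,
      Real.exp_log (by norm_num), show (n : ℝ) * (4 * (B / n)) / 2 = 2 * B by field_simp; norm_num]
      at h
    refine le_trans ?_ h
    have h2 : (2 : ℝ) ^ B * Real.exp (-(2 * B)) ≤ Real.exp (-(B : ℝ)) := by
      have : (2 : ℝ) ^ B ≤ Real.exp B := by
        rw [← Real.exp_one_pow]
        exact pow_le_pow_left₀ (by norm_num) (by linarith [Real.add_one_le_exp (1 : ℝ)]) _
      calc _ ≤ Real.exp B * Real.exp (-(2 * B)) := by gcongr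
        _ = _ := by rw [← Real.exp_add]; congr 1; ring
    have h3 : Real.exp (-(B : ℝ)) ≤ 1 := Real.exp_le_one_iff.mpr (by linarith)
    gcongr
  have he : 0 < 1 - Real.exp (-(B : ℝ)) := by
    have := Real.exp_lt_one_iff.mpr (show -(B : ℝ) < 0 by linarith)
    linarith
  have hRpos : 0 < R := by
    refine lt_of_lt_of_le ?_ hlow
    have : 0 < (L - 2) / ζ := div_pos (by linarith) hζ
    positivity
  have hSpos : 0 < S := by
    have : (B : ℝ) * R ≤ S := by
      rw [hS, integral_finsetSum _ fun i _ => kth_integrable hζ n i]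
      calc (B : ℝ) * R = ∑ i ∈ Finset.range B, R := by simp
        _ ≤ _ := by
          apply Finset.sum_le_sum
          intro i hi
          apply integral_mono (kth_integrable hζ n B) (kth_integrable hζ n i)
          intro v
          have hi' := Finset.mem_range.mp hi
          show kthLargest v (B + 1) ≤ kthLargest v (i + 1)
          rw [kth_iff v i (by omega)]
          have := (kth_iff v B hBn _).mp le_rfl
          omega
    have : 0 < (B : ℝ) * R := by positivity
    linarith
  rw [integral_const_mul, le_div_iff₀ hSpos]
  have h0 : 0 ≤ 1 - 3 / (L + 1) := by
    rw [sub_nonneg, div_le_one (by linarith)]; linarith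
  calc (1 - 3 / (L + 1)) * (1 - Real.exp (-(B : ℝ))) * S
      ≤ (1 - 3 / (L + 1)) * (1 - Real.exp (-(B : ℝ))) * (B * ((L + 1) / ζ)) := by gcongr
    _ = B * ((L - 2) / ζ * (1 - Real.exp (-(B : ℝ)))) := by
        have : L + 1 ≠ 0 := by linarith
        field_simp
        ring
    _ ≤ B * R := by gcongr

/-- Fix `c > 1`, `ν > 0`, and let values be i.i.d. exponential with
rate `ζ > 0`.  For every `ε > 0` there is `B₀` such that for all `B ≥ B₀` and all
`n ≥ ν ⬝ B ^ c`, the ratio of the expected UPGA revenue `E[B ⬝ V₍B₊₁₎]` to the expected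
value surplus `E[∑_{i=1}^{B} V₍ᵢ₎]` is at least `(c − 1) / c − ε`; i.e., as `B → ∞`
with `n ∈ Ω(B ^ c)`, the limit of the ratio is at least `(c − 1) / c`. -/
theorem upga_exponential_revenue_ratio (c ν ζ : ℝ) (hc : 1 < c) (hν : 0 < ν)
    (hζ : 0 < ζ) :
    ∀ ε : ℝ, 0 < ε → ∃ B₀ : ℕ, ∀ B : ℕ, B₀ ≤ B → ∀ n : ℕ, ν * (B : ℝ) ^ c ≤ (n : ℝ) →
      (c - 1) / c - ε
        ≤ (∫ v, (B : ℝ) * kthLargest v (B + 1) ∂(expPi ζ n))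
            / (∫ v, (∑ i ∈ Finset.range B, kthLargest v (i + 1)) ∂(expPi ζ n)) := by
  intro ε hε
  have hc0 : 0 < c := by linarith
  have hlog : Tendsto (fun B : ℕ => Real.log ν + (c - 1) * Real.log B) atTop atTop :=
    tendsto_atTop_add_const_left _ _
      ((Real.tendsto_log_atTop.comp tendsto_natCast_atTop_atTop).const_mul_atTop (by linarith))
  have hexp : Tendsto (fun B : ℕ => Real.exp (-(B : ℝ))) atTop (𝓝 0) :=
    Real.tendsto_exp_neg_atTop_nhds_zero.comp tendsto_natCast_atTop_atTop
  have h1 := hlog.eventually_ge_atTop (6 * c + 3)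
  have h2 := hexp.eventually_le_const (show (0 : ℝ) < 1 / (2 * c) by positivity)
  obtain ⟨B₀, hB₀⟩ := eventually_atTop.mp ((h1.and h2).and (eventually_gt_atTop 0))
  refine ⟨B₀, fun B hB n hn => ?_⟩
  obtain ⟨⟨hl, he⟩, hpos⟩ := hB₀ B hB
  have hB' : (0 : ℝ) < B := by exact_mod_cast hpos
  have hL : Real.log ν + (c - 1) * Real.log B ≤ Real.log (n / B) := by
    have h3 : Real.log (ν * (B : ℝ) ^ c) ≤ Real.log n := Real.log_le_log (by positivity) hn
    have hn0 : (0 : ℝ) < n := lt_of_lt_of_le (by positivity) hn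
    rw [Real.log_mul (by positivity) (by positivity), Real.log_rpow hB'] at h3
    rw [Real.log_div (by positivity) (by positivity)]
    linarith
  refine le_trans ?_ (ratio_ge hζ n B hpos _ rfl (by linarith))
  set L := Real.log ((n : ℝ) / B)
  have h3 : 3 / (L + 1) ≤ 1 / (2 * c) := by
    rw [div_le_div_iff₀ (by linarith) (by positivity)]
    linarith
  have h4 : 0 ≤ 3 / (L + 1) := div_nonneg (by norm_num) (by linarith)
  have h5 := mul_nonneg h4 (Real.exp_pos (-(B : ℝ))).le
  have h6 : (c - 1) / c = 1 - 1 / (2 * c) - 1 / (2 * c) := by field_simp; ring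
  rw [h6]
  nlinarith
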